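/- arXiv:1205.6530 — 2 statements merged into one kernel-verified Lean document; each statement's English description precedes it below -/
import Mathlib

section
/- Let M be a closed linear subspace of L²(𝕋^r, H) that is doubly invariant, i.e. e_m·a ∈ M for every a ∈ M and every m ∈ ℤ^r. Then there exists a measurable range function J such that M = M_J, and J is unique up to equality almost everywhere. -/
open MeasureTheory
open scoped ENNReal NNReal

noncomputable section

/-- The unit cube `[0,1)^r` in `ℝ^r`. -/
def cube (r : ℕ) : Set (Fin r → ℝ) := Set.univ.pi fun _ => Set.Ico (0 : ℝ) 1

/-- Lebesgue measure on the torus `𝕋^r`, identified with the cube `[0,1)^r`. -/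
def torusMeasure (r : ℕ) : Measure (Fin r → ℝ) := volume.restrict (cube r)

/-- The character `e_m(σ) = exp(2πi⟨m,σ⟩)` on `𝕋^r`. -/
def char {r : ℕ} (m : Fin r → ℤ) (σ : Fin r → ℝ) : ℂ :=
  Complex.exp (2 * (Real.pi : ℂ) * Complex.I * ∑ j, (m j : ℂ) * (σ j : ℂ))

/-!
Choose a dense sequence `a` in `M` and let `J x` be the closed span of the values `a n x`. Clearly
`M ≤ M_J`. If `c ∈ Mᗮ`, double invariance says that all Fourier coefficients of the integrable
function `x ↦ ⟪c x, a n x⟫` vanish, so `c x ⟂ J x` for a.e. `x` and hence `c ∈ M_Jᗮ`; thus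
`M_J ≤ Mᗮᗮ = M`. Vanishing Fourier coefficients force a function to vanish a.e. because the
trigonometric polynomials are dense among continuous functions on the torus. The projections onto
`J x` depend measurably on `x` because Gram–Schmidt applied pointwise to `a · x` writes them as
limits of sums of rank-one projections. For uniqueness, test `M_J ≤ M_K` on the sections
`x ↦ P_{J x} u`, cut off to sets of finite measure, with `u` in a countable dense set.
-/

section Determining

open Filter Topology
open scoped BoundedContinuousFunction

variable {X Y 𝕜 E ι : Type*} [MeasurableSpace X] [MeasurableSpace Y] [RCLike 𝕜]
  {μ : Measure X} {ν : Measure Y}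

/-- A family `φ` is determining for `L¹(μ)` if an integrable function is a.e. zero as soon as its
products with all `φ i` have integral zero (for the characters of the torus: uniqueness of Fourier
coefficients). -/
def IsDetermining (μ : Measure X) (φ : ι → X → 𝕜) : Prop :=
  ∀ f : X → 𝕜, Integrable f μ → (∀ i, ∫ x, φ i x * f x ∂μ = 0) → f =ᵐ[μ] 0

lemma IsDetermining.of_measurePreserving {φ : ι → X → 𝕜} {ρ : Y → X}
    (h : IsDetermining ν fun i => φ i ∘ ρ) (hρ : MeasurePreserving ρ ν μ)
    (hφ : ∀ i, AEStronglyMeasurable (φ i) μ) : IsDetermining μ φ := by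
  intro f hf hfφ
  have hcomp : f ∘ ρ =ᵐ[ν] 0 := by
    refine h _ (hρ.integrable_comp_of_integrable hf) fun i => ?_
    have hmul : AEStronglyMeasurable (fun x => φ i x * f x) (ν.map ρ) := by
      rw [hρ.map_eq]
      exact (hφ i).mul hf.1
    rw [← hfφ i, ← hρ.map_eq, integral_map hρ.aemeasurable hmul]
    rfl
  rw [← eLpNorm_eq_zero_iff hf.1 one_ne_zero, ← eLpNorm_comp_measurePreserving hf.1 hρ,
    eLpNorm_congr_ae hcomp, eLpNorm_zero]

variable [TopologicalSpace Y] [BorelSpace Y]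

lemma ae_eq_zero_of_forall_integral_boundedContinuous_smul_eq_zero [HasOuterApproxClosed Y]
    [NormedAddCommGroup E] [NormedSpace ℝ E] [CompleteSpace E] {f : Y → E} (hf : Integrable f ν)
    (h : ∀ g : Y →ᵇ ℝ≥0, ∫ y, g y • f y ∂ν = 0) : f =ᵐ[ν] 0 := by
  refine ae_eq_zero_of_forall_setIntegral_isClosed_eq_zero hf fun K hK => ?_
  have hlim : Tendsto (fun n => ∫ y, hK.apprSeq n y • f y ∂ν) atTop
      (𝓝 (∫ y, K.indicator f y ∂ν)) := by
    refine tendsto_integral_of_dominated_convergence (fun y => ‖f y‖)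
      (fun n => (hK.apprSeq n).continuous.aestronglyMeasurable.smul hf.1) hf.norm
      (fun n => .of_forall fun y => ?_) (.of_forall fun y => ?_)
    · rw [NNReal.smul_def, norm_smul, Real.norm_of_nonneg (NNReal.coe_nonneg _)]
      exact mul_le_of_le_one_left (norm_nonneg _)
        (HasOuterApproxClosed.apprSeq_apply_le_one hK n y)
    · have happr := (tendsto_pi_nhds.1 (HasOuterApproxClosed.tendsto_apprSeq hK) y).smul_const (f y)
      simpa only [← Set.indicator_smul_apply_left, one_smul] using happr
  rw [← integral_indicator hK.measurableSet]
  refine tendsto_nhds_unique hlim ?_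
  simp only [h, tendsto_const_nhds]

/-- Integration against an integrable function, as a continuous functional on `C(Y, 𝕜)`. -/
def integralMulCLM [CompactSpace Y] {f : Y → 𝕜} (hf : Integrable f ν) : C(Y, 𝕜) →L[𝕜] 𝕜 :=
  have hint (g : C(Y, 𝕜)) : Integrable (fun y => g y * f y) ν :=
    hf.bdd_mul g.continuous.aestronglyMeasurable (.of_forall g.norm_coe_le_norm)
  LinearMap.mkContinuous
    { toFun := fun g => ∫ y, g y * f y ∂ν
      map_add' := fun g₁ g₂ => by
        simpa only [ContinuousMap.add_apply, add_mul] using integral_add (hint g₁) (hint g₂)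
      map_smul' := fun c g => by
        simpa only [ContinuousMap.smul_apply, smul_eq_mul, mul_assoc, RingHom.id_apply] using
          integral_const_mul c _ }
    (∫ y, ‖f y‖ ∂ν) fun g => by
      rw [mul_comm, ← integral_const_mul]
      refine norm_integral_le_of_norm_le (hf.norm.const_mul _) (.of_forall fun y => ?_)
      rw [norm_mul]
      gcongr
      exact g.norm_coe_le_norm y

lemma isDetermining_of_dense_span [CompactSpace Y] [HasOuterApproxClosed Y] {ψ : ι → C(Y, 𝕜)}
    (hψ : Dense (Submodule.span 𝕜 (Set.range ψ) : Set C(Y, 𝕜))) :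
    IsDetermining ν fun i => ψ i := by
  intro f hf hfψ
  have hzero : integralMulCLM hf = 0 := by
    refine ContinuousLinearMap.ext_on hψ ?_
    rintro _ ⟨i, rfl⟩
    exact hfψ i
  refine ae_eq_zero_of_forall_integral_boundedContinuous_smul_eq_zero hf fun g => ?_
  let g' : C(Y, 𝕜) := ⟨fun y => ((g y : ℝ) : 𝕜), by fun_prop⟩
  have hg : integralMulCLM hf g' = 0 := by rw [hzero, zero_apply]
  rw [← hg]
  refine integral_congr_ae (.of_forall fun y => ?_)
  simp only [NNReal.smul_def, RCLike.real_smul_eq_coe_mul]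
  rfl

end Determining

section GramSchmidt

open Filter Topology InnerProductSpace
variable {X 𝕜 H : Type*} [RCLike 𝕜] [NormedAddCommGroup H] [InnerProductSpace 𝕜 H]

lemma starProjection_span_image_Iio (f : ℕ → H) (n : ℕ)
    [(Submodule.span 𝕜 (f '' Set.Iio n)).HasOrthogonalProjection] (u : H) :
    (Submodule.span 𝕜 (f '' Set.Iio n)).starProjection u =
      ∑ i ∈ Finset.range n, (𝕜 ∙ gramSchmidt 𝕜 f i).starProjection u := by
  have hspan := span_gramSchmidt_Iio 𝕜 f n
  refine Submodule.eq_starProjection_of_mem_orthogonal (Submodule.sum_mem _ fun i hi => ?_) ?_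
  · rw [← hspan]
    refine Submodule.span_mono ?_ (Submodule.starProjection_apply_mem _ u)
    exact Set.singleton_subset_iff.2 (Set.mem_image_of_mem _ (Finset.mem_range.1 hi))
  · have hself (j : ℕ) : (𝕜 ∙ gramSchmidt 𝕜 f j).starProjection (gramSchmidt 𝕜 f j) =
        gramSchmidt 𝕜 f j :=
      Submodule.starProjection_eq_self_iff.2 (Submodule.mem_span_singleton_self _)
    have hne (i j : ℕ) (hij : i ≠ j) :
        (𝕜 ∙ gramSchmidt 𝕜 f i).starProjection (gramSchmidt 𝕜 f j) = 0 := by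
      rw [Submodule.starProjection_singleton, gramSchmidt_orthogonal 𝕜 f hij, zero_div, zero_smul]
    rw [← hspan]
    refine (Submodule.isOrtho_span.2 ?_ : (𝕜 ∙ _) ⟂ _) (Submodule.mem_span_singleton_self _)
    rintro _ rfl _ ⟨j, hj, rfl⟩
    rw [inner_eq_zero_symm, inner_sub_right,
      inner_sum, Finset.sum_eq_single_of_mem j (Finset.mem_range.2 hj),
      ← Submodule.inner_starProjection_left_eq_right, hself, sub_self]
    intro i _ hij
    rw [← Submodule.inner_starProjection_left_eq_right, hne i j hij, inner_zero_left]

lemma tendsto_sum_starProjection_gramSchmidt (f : ℕ → H)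
    [(Submodule.span 𝕜 (Set.range f)).topologicalClosure.HasOrthogonalProjection] (u : H) :
    Tendsto (fun n => ∑ i ∈ Finset.range n, (𝕜 ∙ gramSchmidt 𝕜 f i).starProjection u) atTop
      (𝓝 ((Submodule.span 𝕜 (Set.range f)).topologicalClosure.starProjection u)) := by
  have hfin (n : ℕ) : FiniteDimensional 𝕜 (Submodule.span 𝕜 (f '' Set.Iio n)) :=
    FiniteDimensional.span_of_finite 𝕜 ((Set.finite_Iio n).image f)
  have hsup : ⨆ n, Submodule.span 𝕜 (f '' Set.Iio n) = Submodule.span 𝕜 (Set.range f) := by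
    rw [← Submodule.span_iUnion, ← Set.image_iUnion, Set.iUnion_Iio, Set.image_univ]
  have hmono : Monotone fun n => Submodule.span 𝕜 (f '' Set.Iio n) := fun m n hmn =>
    Submodule.span_mono (Set.image_mono (Set.Iio_subset_Iio hmn))
  simp only [← starProjection_span_image_Iio]
  have : (⨆ n, Submodule.span 𝕜 (f '' Set.Iio n)).topologicalClosure.HasOrthogonalProjection :=
    hsup ▸ inferInstance
  convert! Submodule.starProjection_tendsto_closure_iSup _ hmono u
  exact hsup.symm

variable [MeasurableSpace X]

lemma stronglyMeasurable_starProjection_span_singleton {g u : X → H} (hg : StronglyMeasurable g)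
    (hgu : Measurable fun x => inner 𝕜 (g x) (u x)) :
    StronglyMeasurable fun x => (𝕜 ∙ g x).starProjection (u x) := by
  simp only [Submodule.starProjection_singleton]
  have hnorm : Measurable fun x => ((‖g x‖ ^ 2 : ℝ) : 𝕜) :=
    RCLike.measurable_ofReal.comp (hg.norm.measurable.pow_const 2)
  exact (hgu.div hnorm).stronglyMeasurable.smul hg

lemma stronglyMeasurable_gramSchmidt {a : ℕ → X → H} (ha : ∀ n, StronglyMeasurable (a n)) (n : ℕ) :
    StronglyMeasurable fun x => gramSchmidt 𝕜 (a · x) n := by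
  induction n using Nat.strong_induction_on with
  | _ n ih =>
    rw [funext fun x => gramSchmidt_def 𝕜 (a · x) n]
    refine (ha n).sub (Finset.stronglyMeasurable_fun_sum _ fun i hi => ?_)
    have hi' := ih i (Finset.mem_Iio.1 hi)
    exact stronglyMeasurable_starProjection_span_singleton hi' (hi'.inner (ha n)).measurable

lemma stronglyMeasurable_of_measurable_inner [TopologicalSpace.SeparableSpace H] {f : X → H}
    (hf : ∀ v : H, Measurable fun x => inner 𝕜 v (f x)) : StronglyMeasurable f := by
  let d := TopologicalSpace.denseSeq H
  have htop : (Submodule.span 𝕜 (Set.range d)).topologicalClosure = ⊤ :=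
    Submodule.dense_iff_topologicalClosure_eq_top.1
      ((TopologicalSpace.denseRange_denseSeq H).mono Submodule.subset_span)
  refine stronglyMeasurable_of_tendsto atTop
    (f := fun n x => ∑ i ∈ Finset.range n, (𝕜 ∙ gramSchmidt 𝕜 d i).starProjection (f x))
    (fun n => Finset.stronglyMeasurable_fun_sum _ fun i _ =>
      stronglyMeasurable_starProjection_span_singleton stronglyMeasurable_const (hf _))
    (tendsto_pi_nhds.2 fun x => ?_)
  have : (Submodule.span 𝕜 (Set.range d)).topologicalClosure.HasOrthogonalProjection := by
    rw [htop]
    infer_instance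
  convert! tendsto_sum_starProjection_gramSchmidt (𝕜 := 𝕜) d (f x)
  rw [eq_comm, Submodule.starProjection_eq_self_iff, htop]
  exact Submodule.mem_top

end GramSchmidt

section RangeFunction

open Filter InnerProductSpace

variable {X 𝕜 H ι : Type*} [RCLike 𝕜] [NormedAddCommGroup H] [InnerProductSpace 𝕜 H]

/-- The range function generated by the family `a`: the closed linear span of the values at each
point. -/
def closedSpan (a : ι → X → H) (x : X) : Submodule 𝕜 H :=
  (Submodule.span 𝕜 (Set.range (a · x))).topologicalClosure

lemma mem_closedSpan (a : ι → X → H) (i : ι) (x : X) : a i x ∈ closedSpan (𝕜 := 𝕜) a x :=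
  Submodule.le_topologicalClosure _ (Submodule.subset_span ⟨i, rfl⟩)

lemma isClosed_closedSpan (a : ι → X → H) (x : X) :
    IsClosed (closedSpan (𝕜 := 𝕜) a x : Set H) :=
  Submodule.isClosed_topologicalClosure _

lemma closedSpan_le {a : ι → X → H} {x : X} {K : Submodule 𝕜 H} (hK : IsClosed (K : Set H))
    (h : ∀ i, a i x ∈ K) : closedSpan a x ≤ K :=
  Submodule.topologicalClosure_minimal _ (Submodule.span_le.2 (Set.range_subset_iff.2 h)) hK

variable [MeasurableSpace X] {μ : Measure X}

/-- `J` is a measurable range function: its fibers are closed, and the orthogonal projections `P x`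
onto them, characterized by `P x u ∈ J x` and `u - P x u ∈ (J x)ᗮ`, are weakly measurable. -/
structure IsMeasurableRange (J : X → Submodule 𝕜 H) : Prop where
  isClosed : ∀ x, IsClosed (J x : Set H)
  exists_projection : ∃ P : X → H →L[𝕜] H,
    (∀ x u, P x u ∈ J x ∧ u - P x u ∈ (J x)ᗮ) ∧
    ∀ u v : H, Measurable fun x => inner 𝕜 (P x u) v

lemma IsMeasurableRange.hasOrthogonalProjection {J : X → Submodule 𝕜 H}
    (hJ : IsMeasurableRange J) (x : X) : (J x).HasOrthogonalProjection :=
  let ⟨P, hP, _⟩ := hJ.exists_projection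
  ⟨fun u => ⟨P x u, hP x u⟩⟩

lemma IsMeasurableRange.measurable_inner_starProjection {J : X → Submodule 𝕜 H}
    (hJ : IsMeasurableRange J) (u v : H) :
    have := hJ.hasOrthogonalProjection
    Measurable fun x => inner 𝕜 ((J x).starProjection u) v := by
  have := hJ.hasOrthogonalProjection
  obtain ⟨P, hP, hPmeas⟩ := hJ.exists_projection
  simpa only [Submodule.eq_starProjection_of_mem_orthogonal (hP _ u).1 (hP _ u).2] using hPmeas u v

lemma IsMeasurableRange.stronglyMeasurable_starProjection [TopologicalSpace.SeparableSpace H]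
    {J : X → Submodule 𝕜 H} (hJ : IsMeasurableRange J) (u : H) :
    have := hJ.hasOrthogonalProjection
    StronglyMeasurable fun x => (J x).starProjection u := by
  have := hJ.hasOrthogonalProjection
  refine stronglyMeasurable_of_measurable_inner (𝕜 := 𝕜) fun v => ?_
  simpa only [Submodule.inner_starProjection_left_eq_right] using
    hJ.measurable_inner_starProjection v u

lemma isMeasurableRange_closedSpan [CompleteSpace H] {a : ℕ → X → H}
    (ha : ∀ n, StronglyMeasurable (a n)) : IsMeasurableRange (𝕜 := 𝕜) (closedSpan a) := by
  have hproj (x : X) : (closedSpan (𝕜 := 𝕜) a x).HasOrthogonalProjection :=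
    have := (isClosed_closedSpan (𝕜 := 𝕜) a x).completeSpace_coe
    inferInstance
  refine ⟨isClosed_closedSpan a, fun x => (closedSpan a x).starProjection, fun x u =>
    ⟨Submodule.starProjection_apply_mem _ u, Submodule.sub_starProjection_mem_orthogonal u⟩,
    fun u v => ?_⟩
  have hsummand (i : ℕ) :
      StronglyMeasurable fun x => (𝕜 ∙ gramSchmidt 𝕜 (a · x) i).starProjection u := by
    have hi := stronglyMeasurable_gramSchmidt (𝕜 := 𝕜) ha i
    exact stronglyMeasurable_starProjection_span_singleton hi
      (hi.inner stronglyMeasurable_const).measurable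
  have hmeas : StronglyMeasurable fun x => (closedSpan (𝕜 := 𝕜) a x).starProjection u :=
    stronglyMeasurable_of_tendsto atTop
      (fun n => Finset.stronglyMeasurable_fun_sum (Finset.range n) fun i _ => hsummand i)
      (tendsto_pi_nhds.2 fun x => @tendsto_sum_starProjection_gramSchmidt _ _ _ _ _ _ (hproj x) u)
  exact (hmeas.inner stronglyMeasurable_const).measurable

/-- The space `M_J` of `L^p` functions with values a.e. in the range function `J`. -/
def lpSections (p : ℝ≥0∞) (μ : Measure X) (J : X → Submodule 𝕜 H) : Submodule 𝕜 (Lp H p μ) where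
  carrier := {a | ∀ᵐ x ∂μ, a x ∈ J x}
  add_mem' {a b} ha hb := by
    filter_upwards [ha, hb, Lp.coeFn_add a b] with x hax hbx hab
    rw [hab]
    exact (J x).add_mem hax hbx
  zero_mem' := by
    filter_upwards [Lp.coeFn_zero H p μ] with x hx
    rw [hx]
    exact (J x).zero_mem
  smul_mem' c a ha := by
    filter_upwards [ha, Lp.coeFn_smul c a] with x hax hca
    rw [hca]
    exact (J x).smul_mem c hax

lemma mem_lpSections {p : ℝ≥0∞} {J : X → Submodule 𝕜 H} {a : Lp H p μ} :
    a ∈ lpSections p μ J ↔ ∀ᵐ x ∂μ, a x ∈ J x := Iff.rfl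

lemma isClosed_lpSections {p : ℝ≥0∞} [Fact (1 ≤ p)] {J : X → Submodule 𝕜 H}
    (hJ : ∀ x, IsClosed (J x : Set H)) : IsClosed (lpSections p μ J : Set (Lp H p μ)) := by
  refine IsSeqClosed.isClosed fun a b ha hab => ?_
  obtain ⟨ns, -, hns⟩ := (tendstoInMeasure_of_tendsto_Lp hab).exists_seq_tendsto_ae
  filter_upwards [hns, ae_all_iff.2 ha] with x hlim hmem
  exact (hJ x).mem_of_tendsto hlim (.of_forall fun n => hmem (ns n))

lemma ae_le_of_lpSections_le [SigmaFinite μ] [TopologicalSpace.SeparableSpace H] {p : ℝ≥0∞}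
    {J K : X → Submodule 𝕜 H} (hJ : IsMeasurableRange J) (hK : ∀ x, IsClosed (K x : Set H))
    (hJK : lpSections p μ J ≤ lpSections p μ K) : ∀ᵐ x ∂μ, J x ≤ K x := by
  have := hJ.hasOrthogonalProjection
  have hdense : ∀ᵐ x ∂μ, ∀ n k, x ∈ spanningSets μ n →
      (J x).starProjection (TopologicalSpace.denseSeq H k) ∈ K x := by
    refine ae_all_iff.2 fun n => ae_all_iff.2 fun k => ?_
    let u := TopologicalSpace.denseSeq H k
    let f : X → H := (spanningSets μ n).indicator fun x => (J x).starProjection u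
    have : IsFiniteMeasure (μ.restrict (spanningSets μ n)) :=
      isFiniteMeasure_restrict.2 (measure_spanningSets_lt_top μ n).ne
    have hf : MemLp f p μ :=
      (memLp_indicator_iff_restrict (measurableSet_spanningSets μ n)).2 <|
        .of_bound (hJ.stronglyMeasurable_starProjection u).aestronglyMeasurable ‖u‖
          (.of_forall fun x => (J x).norm_starProjection_apply_le u)
    have hfJ : hf.toLp f ∈ lpSections p μ J := by
      filter_upwards [hf.coeFn_toLp] with x hx
      rw [hx]
      by_cases hxn : x ∈ spanningSets μ n
      · simpa only [f, Set.indicator_of_mem hxn] using (J x).starProjection_apply_mem u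
      · simpa only [f, Set.indicator_of_notMem hxn] using (J x).zero_mem
    filter_upwards [hf.coeFn_toLp, hJK hfJ] with x hx hxK hxn
    simpa only [hx, f, Set.indicator_of_mem hxn] using hxK
  filter_upwards [hdense] with x hx v hv
  have hmem (w : H) : (J x).starProjection w ∈ K x :=
    (TopologicalSpace.denseRange_denseSeq H).induction_on w
      ((hK x).preimage (J x).starProjection.continuous)
      fun k => hx _ k (mem_spanningSetsIndex μ x)
  rw [← Submodule.starProjection_eq_self_iff.2 hv]
  exact hmem v

lemma ae_eq_of_lpSections_eq [SigmaFinite μ] [TopologicalSpace.SeparableSpace H] {p : ℝ≥0∞}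
    {J K : X → Submodule 𝕜 H} (hJ : IsMeasurableRange J) (hK : IsMeasurableRange K)
    (hJK : lpSections p μ J = lpSections p μ K) : J =ᵐ[μ] K := by
  filter_upwards [ae_le_of_lpSections_le hJ hK.isClosed hJK.le,
    ae_le_of_lpSections_le hK hJ.isClosed hJK.ge] with x hle hge using le_antisymm hle hge

end RangeFunction

section MultiplicationInvariant

variable {X 𝕜 H ι : Type*} [MeasurableSpace X] [RCLike 𝕜] [NormedAddCommGroup H]
  [InnerProductSpace 𝕜 H] {μ : Measure X} {φ : ι → X → 𝕜} {M : Submodule 𝕜 (Lp H 2 μ)}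

/-- Invariance of a subspace of `L²(μ; H)` under multiplication by each `φ i`. No boundedness of
`φ i` is built in: the product only has to agree a.e. with an element of `M`. -/
def IsMultiplicationInvariant (φ : ι → X → 𝕜) (M : Submodule 𝕜 (Lp H 2 μ)) : Prop :=
  ∀ a ∈ M, ∀ i, ∃ b ∈ M, b =ᵐ[μ] fun x => φ i x • a x

lemma IsMultiplicationInvariant.ae_inner_eq_zero (hM : IsMultiplicationInvariant φ M)
    (hφ : IsDetermining μ φ) {a c : Lp H 2 μ} (ha : a ∈ M) (hc : c ∈ Mᗮ) :
    ∀ᵐ x ∂μ, inner 𝕜 (c x) (a x) = 0 := by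
  refine hφ _ (L2.integrable_inner c a) fun i => ?_
  obtain ⟨b, hbM, hb⟩ := hM a ha i
  rw [← Submodule.inner_left_of_mem_orthogonal hbM hc, L2.inner_def]
  refine integral_congr_ae ?_
  filter_upwards [hb] with x hx
  rw [hx, inner_smul_right]

lemma IsMultiplicationInvariant.lpSections_closedSpan_le {κ : Type*} [Countable κ]
    [M.HasOrthogonalProjection] (hM : IsMultiplicationInvariant φ M) (hφ : IsDetermining μ φ)
    {a : κ → Lp H 2 μ} (ha : ∀ k, a k ∈ M) :
    lpSections 2 μ (closedSpan fun k => a k) ≤ M := by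
  intro b hb
  rw [← M.orthogonal_orthogonal, Submodule.mem_orthogonal]
  intro c hc
  rw [L2.inner_def]
  refine integral_eq_zero_of_ae ?_
  filter_upwards [hb, ae_all_iff.2 fun k => hM.ae_inner_eq_zero hφ (ha k) hc] with x hbx hcx
  have hle : closedSpan (fun k => a k) x ≤ (𝕜 ∙ c x)ᗮ :=
    closedSpan_le (Submodule.isClosed_orthogonal _) fun k =>
      Submodule.mem_orthogonal_singleton_iff_inner_right.2 (hcx k)
  exact Submodule.mem_orthogonal_singleton_iff_inner_right.1 (hle hbx)

lemma le_lpSections_closedSpan {p : ℝ≥0∞} [Fact (1 ≤ p)] {κ : Type*} {N : Submodule 𝕜 (Lp H p μ)}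
    {a : κ → N} (ha : DenseRange a) :
    N ≤ lpSections p μ (closedSpan fun k => (a k : Lp H p μ)) := fun b hb =>
  ha.induction_on (p := fun b : N => (b : Lp H p μ) ∈ lpSections p μ _) ⟨b, hb⟩
    ((isClosed_lpSections (isClosed_closedSpan _)).preimage continuous_subtype_val)
    fun k => mem_lpSections.2 (.of_forall fun x => mem_closedSpan (fun k => ⇑(a k : Lp H p μ)) k x)

theorem doubly_invariant_eq_MJ_general [CompleteSpace H] [TopologicalSpace.SeparableSpace H]
    [SigmaFinite μ] [IsSeparable μ] (hφ : IsDetermining μ φ)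
    (hMcl : IsClosed (M : Set (Lp H 2 μ))) (hM : IsMultiplicationInvariant φ M) :
    ∃ J : X → Submodule 𝕜 H, IsMeasurableRange J ∧ M = lpSections 2 μ J ∧
      ∀ J' : X → Submodule 𝕜 H, IsMeasurableRange J' → M = lpSections 2 μ J' → J =ᵐ[μ] J' := by
  have : Fact ((2 : ℝ≥0∞) ≠ ∞) := ⟨by simp⟩
  have : CompleteSpace M := hMcl.completeSpace_coe
  let a : ℕ → M := TopologicalSpace.denseSeq M
  let J : X → Submodule 𝕜 H := closedSpan fun n => (a n : Lp H 2 μ)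
  have hJ : IsMeasurableRange J :=
    isMeasurableRange_closedSpan fun n => Lp.stronglyMeasurable (a n : Lp H 2 μ)
  have hMJ : M = lpSections 2 μ J := le_antisymm
    (le_lpSections_closedSpan (TopologicalSpace.denseRange_denseSeq M))
    (hM.lpSections_closedSpan_le hφ fun n => (a n).2)
  exact ⟨J, hJ, hMJ, fun J' hJ' hMJ' => ae_eq_of_lpSections_eq hJ hJ' (hMJ ▸ hMJ')⟩

end MultiplicationInvariant

section Torus
open AddCircle

/-- The inverse of the identification of the cube `[0,1)^r` with the torus `(ℝ/ℤ)^r`. -/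
def torusLift {r : ℕ} (y : UnitAddTorus (Fin r)) : Fin r → ℝ := fun j => equivIco 1 0 (y j)

lemma char_eq_mFourier_coe {r : ℕ} (m : Fin r → ℤ) (σ : Fin r → ℝ) :
    char m σ = UnitAddTorus.mFourier m fun j => (σ j : UnitAddCircle) := by
  simp only [char, UnitAddTorus.mFourier, ContinuousMap.coe_mk, fourier_coe_apply,
    ← Complex.exp_sum, Finset.mul_sum]
  congr! 2
  push_cast
  ring

lemma char_torusLift {r : ℕ} (m : Fin r → ℤ) (y : UnitAddTorus (Fin r)) :
    char m (torusLift y) = UnitAddTorus.mFourier m y := by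
  simp only [char_eq_mFourier_coe, torusLift, coe_equivIco]

lemma continuous_char {r : ℕ} (m : Fin r → ℤ) : Continuous (char m) := by
  unfold char
  fun_prop

lemma measurePreserving_coe_equivIco (T : ℝ) [Fact (0 < T)] (a : ℝ) :
    MeasurePreserving (fun y : AddCircle T => (equivIco T a y : ℝ)) volume
      (volume.restrict (Set.Ico a (a + T))) := by
  have hmk : MeasurePreserving ((↑) : ℝ → AddCircle T) (volume.restrict (Set.Ico a (a + T)))
      volume := by
    rw [Measure.restrict_congr_set Ico_ae_eq_Ioc]
    exact AddCircle.measurePreserving_mk T a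
  have hmeas : Measurable fun y : AddCircle T => (equivIco T a y : ℝ) :=
    measurable_subtype_coe.comp (measurableEquivIco T a).measurable
  refine ⟨hmeas, ?_⟩
  rw [← hmk.map_eq, Measure.map_map hmeas hmk.measurable]
  refine (Measure.map_congr ?_).trans Measure.map_id
  filter_upwards [ae_restrict_mem measurableSet_Ico] with t ht
  exact equivIco_coe_of_mem ht

lemma measurePreserving_torusLift (r : ℕ) :
    MeasurePreserving torusLift volume (torusMeasure r) := by
  rw [torusMeasure, cube, volume_pi, volume_pi, Measure.restrict_pi_pi]
  have hcoord : MeasurePreserving (fun y : UnitAddCircle => (equivIco 1 0 y : ℝ)) volume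
      (volume.restrict (Set.Ico 0 1)) := by
    convert! measurePreserving_coe_equivIco 1 0
    rw [zero_add]
  exact measurePreserving_pi _ _ fun _ => hcoord

lemma isDetermining_char (r : ℕ) :
    IsDetermining (torusMeasure r) (char : (Fin r → ℤ) → (Fin r → ℝ) → ℂ) := by
  have hdense : Dense (Submodule.span ℂ (Set.range (UnitAddTorus.mFourier (d := Fin r))) :
      Set C(UnitAddTorus (Fin r), ℂ)) :=
    Submodule.dense_iff_topologicalClosure_eq_top.2 UnitAddTorus.span_mFourier_closure_eq_top
  refine IsDetermining.of_measurePreserving ?_ (measurePreserving_torusLift r) fun m =>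
    (continuous_char m).aestronglyMeasurable
  simpa only [Function.comp_def, char_torusLift] using isDetermining_of_dense_span hdense

instance (r : ℕ) : SigmaFinite (torusMeasure r) :=
  inferInstanceAs (SigmaFinite (volume.restrict (cube r)))

end Torus

/-- **Helson's theorem.** A closed, doubly invariant subspace `M` of `L²(𝕋^r, H)` is of the
form `M_J` for a measurable range function `J` (measurability expressed by a measurable family
`P` of orthogonal projections onto the fibers), unique up to equality almost everywhere. -/
theorem doubly_invariant_eq_MJ (r : ℕ) (hr : 0 < r)
    {H : Type} [NormedAddCommGroup H] [InnerProductSpace ℂ H] [CompleteSpace H]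
    [TopologicalSpace.SeparableSpace H]
    (M : Submodule ℂ (Lp H 2 (torusMeasure r)))
    (hMcl : IsClosed (M : Set (Lp H 2 (torusMeasure r))))
    (hMinv : ∀ a ∈ M, ∀ m : Fin r → ℤ,
      ∃ b ∈ M, ⇑b =ᵐ[torusMeasure r] fun σ => char m σ • ⇑a σ) :
    ∃ J : (Fin r → ℝ) → Submodule ℂ H,
      (∀ σ, IsClosed (J σ : Set H)) ∧
      (∃ P : (Fin r → ℝ) → H →L[ℂ] H,
        (∀ σ (u : H), P σ u ∈ J σ ∧ u - P σ u ∈ (J σ)ᗮ) ∧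
        ∀ u v : H, Measurable fun σ => (inner ℂ (P σ u) v : ℂ)) ∧
      (M : Set (Lp H 2 (torusMeasure r))) =
        {a : Lp H 2 (torusMeasure r) | ∀ᵐ σ ∂(torusMeasure r), ⇑a σ ∈ J σ} ∧
      (∀ J' : (Fin r → ℝ) → Submodule ℂ H,
        (∀ σ, IsClosed (J' σ : Set H)) →
        (∃ P' : (Fin r → ℝ) → H →L[ℂ] H,
          (∀ σ (u : H), P' σ u ∈ J' σ ∧ u - P' σ u ∈ (J' σ)ᗮ) ∧
          ∀ u v : H, Measurable fun σ => (inner ℂ (P' σ u) v : ℂ)) →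
        (M : Set (Lp H 2 (torusMeasure r))) =
          {a : Lp H 2 (torusMeasure r) | ∀ᵐ σ ∂(torusMeasure r), ⇑a σ ∈ J' σ} →
        ∀ᵐ σ ∂(torusMeasure r), J σ = J' σ) := by
  obtain ⟨J, hJ, hMJ, hunique⟩ := doubly_invariant_eq_MJ_general (isDetermining_char r) hMcl hMinv
  exact ⟨J, hJ.isClosed, hJ.exists_projection, congrArg SetLike.coe hMJ,
    fun J' hJ'cl hJ'P hMJ' => hunique J' ⟨hJ'cl, hJ'P⟩ (SetLike.coe_injective hMJ')⟩
end
end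

section
/- Let 0 < A ≤ B < ∞. The family {f_{i,m} : i ∈ I, m ∈ ℤ^r} is a frame for S with constants A and B if and only if for a.e. σ ∈ 𝕋^r the family {g_i(σ) : i ∈ I} is a frame for J(σ) with the same constants A and B. -/
open MeasureTheory
open scoped ENNReal NNReal

noncomputable section

/-!
Parseval's identity, valid in `[0, ∞]` for every integrable function on the torus, turns the sum
over `m` of `|⟨h, f_{i,m}⟩|²` into `∫ |⟨h(σ), g_i(σ)⟩|² dσ`. Both sides of the frame inequality for
`h` are therefore integrals over `σ` of the corresponding sides for `h(σ)` in `J(σ)`. Since a vector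
orthogonal to `S` is a.e. orthogonal to `J(σ)`, the space `S` consists of all `h` with `h(σ) ∈ J(σ)`
a.e. In particular it is stable under restriction to measurable sets, so the integrated inequality
localises to almost every `σ`; applying it to the countably many finite combinations of the `g_i`
whose coefficients come from a dense sequence gives the inequality on a dense subset of `J(σ)`, for
a.e. `σ` simultaneously.

The Parseval identity for a merely integrable function rests on the uniqueness of Fourier
coefficients in `L¹`: if the coefficients are square summable, they belong to an `L²` function,
which must be the given one.
-/

open Filter Topology UnitAddTorus
open scoped ComplexConjugate

section Frames

variable {𝕜 E ι : Type*} [RCLike 𝕜] [NormedAddCommGroup E] [InnerProductSpace 𝕜 E]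

variable (𝕜) in
/-- The squared `ℓ²` norm, in `[0, ∞]`, of the analysis coefficients `⟨x, v i⟩` of `x`. -/
def analysisEnergy (v : ι → E) (x : E) : ℝ≥0∞ := ∑' i, ‖inner 𝕜 x (v i)‖ₑ ^ 2

variable (𝕜) in
/-- The two-sided frame inequality with constants `a`, `b` for the family `v`, at the vector `x`. -/
def FrameInequality (a b : ℝ≥0) (v : ι → E) (x : E) : Prop :=
  a * ‖x‖ₑ ^ 2 ≤ analysisEnergy 𝕜 v x ∧ analysisEnergy 𝕜 v x ≤ b * ‖x‖ₑ ^ 2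

variable (𝕜) in
/-- The family `v` is a frame, with constants `a` and `b`, for its closed linear span. -/
def IsFrameSequence (a b : ℝ≥0) (v : ι → E) : Prop :=
  ∀ x ∈ (Submodule.span 𝕜 (Set.range v)).topologicalClosure, FrameInequality 𝕜 a b v x

lemma sqrt_analysisEnergy_add_le (v : ι → E) (x y : E) :
    analysisEnergy 𝕜 v (x + y) ^ (1 / 2 : ℝ) ≤
      analysisEnergy 𝕜 v x ^ (1 / 2 : ℝ) + analysisEnergy 𝕜 v y ^ (1 / 2 : ℝ) := by
  let _ : MeasurableSpace ι := ⊤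
  have energy_eq (z : E) : analysisEnergy 𝕜 v z ^ (1 / 2 : ℝ) =
      eLpNorm (fun i => inner 𝕜 z (v i)) 2 Measure.count := by
    simp [analysisEnergy, eLpNorm_eq_lintegral_rpow_enorm_toReal, lintegral_count]
  have coeff_aesm (z : E) : AEStronglyMeasurable (fun i => inner 𝕜 z (v i)) Measure.count :=
    (measurable_from_top).aestronglyMeasurable
  simp only [energy_eq, inner_add_left]
  exact eLpNorm_add_le (coeff_aesm x) (coeff_aesm y) one_le_two

lemma analysisEnergy_le_of_mem_closure {b : ℝ≥0} {v : ι → E} {D : Set E}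
    (hD : ∀ y ∈ D, analysisEnergy 𝕜 v y ≤ b * ‖y‖ₑ ^ 2) {x : E} (hx : x ∈ closure D) :
    analysisEnergy 𝕜 v x ≤ b * ‖x‖ₑ ^ 2 := by
  rw [analysisEnergy, ENNReal.tsum_eq_iSup_sum]
  refine iSup_le fun t => ?_
  have hclosed : IsClosed {y : E | ∑ i ∈ t, ‖inner 𝕜 y (v i)‖ₑ ^ 2 ≤ b * ‖y‖ₑ ^ 2} := by
    refine isClosed_le (by fun_prop) ?_
    exact (ENNReal.continuous_const_mul ENNReal.coe_ne_top).comp (by fun_prop)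
  exact closure_minimal (fun y hy => (ENNReal.sum_le_tsum t).trans (hD y hy)) hclosed hx

lemma le_analysisEnergy_of_mem_closure {a b : ℝ≥0} {v : ι → E} {D : Set E} {x : E}
    (hlower : ∀ y ∈ D, a * ‖y‖ₑ ^ 2 ≤ analysisEnergy 𝕜 v y)
    (hupper : ∀ y ∈ D, analysisEnergy 𝕜 v (y - x) ≤ b * ‖y - x‖ₑ ^ 2) (hx : x ∈ closure D) :
    a * ‖x‖ₑ ^ 2 ≤ analysisEnergy 𝕜 v x := by
  have sqrt_mul_sq (c s : ℝ≥0∞) : (c * s ^ 2) ^ (1 / 2 : ℝ) = c ^ (1 / 2 : ℝ) * s := by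
    rw [ENNReal.mul_rpow_of_nonneg _ _ (by norm_num), ← ENNReal.rpow_natCast_mul]
    simp
  have sqrt_ne_top (c : ℝ≥0) : (c : ℝ≥0∞) ^ (1 / 2 : ℝ) ≠ ∞ := by finiteness
  have hclosed : IsClosed {y : E | (a : ℝ≥0∞) ^ (1 / 2 : ℝ) * ‖y‖ₑ ≤
      analysisEnergy 𝕜 v x ^ (1 / 2 : ℝ) + (b : ℝ≥0∞) ^ (1 / 2 : ℝ) * ‖y - x‖ₑ} := by
    refine isClosed_le ?_ (continuous_const.add ?_)
    · exact (ENNReal.continuous_const_mul (sqrt_ne_top a)).comp continuous_enorm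
    · exact (ENNReal.continuous_const_mul (sqrt_ne_top b)).comp (by fun_prop)
  have hsqrt : (a : ℝ≥0∞) ^ (1 / 2 : ℝ) * ‖x‖ₑ ≤ analysisEnergy 𝕜 v x ^ (1 / 2 : ℝ) := by
    suffices h : D ⊆ {y : E | (a : ℝ≥0∞) ^ (1 / 2 : ℝ) * ‖y‖ₑ ≤
        analysisEnergy 𝕜 v x ^ (1 / 2 : ℝ) + (b : ℝ≥0∞) ^ (1 / 2 : ℝ) * ‖y - x‖ₑ} by
      simpa using closure_minimal h hclosed hx
    intro y hy
    calc (a : ℝ≥0∞) ^ (1 / 2 : ℝ) * ‖y‖ₑ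
        = (a * ‖y‖ₑ ^ 2) ^ (1 / 2 : ℝ) := (sqrt_mul_sq _ _).symm
      _ ≤ analysisEnergy 𝕜 v (x + (y - x)) ^ (1 / 2 : ℝ) := by
        rw [add_sub_cancel]; gcongr; exact hlower y hy
      _ ≤ analysisEnergy 𝕜 v x ^ (1 / 2 : ℝ) + analysisEnergy 𝕜 v (y - x) ^ (1 / 2 : ℝ) :=
        sqrt_analysisEnergy_add_le v _ _
      _ ≤ analysisEnergy 𝕜 v x ^ (1 / 2 : ℝ) + (b * ‖y - x‖ₑ ^ 2) ^ (1 / 2 : ℝ) := by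
        gcongr; exact hupper y hy
      _ = _ := by rw [sqrt_mul_sq]
  rwa [← sqrt_mul_sq, ENNReal.rpow_le_rpow_iff (by norm_num)] at hsqrt

lemma isFrameSequence_of_dense {a b : ℝ≥0} {v : ι → E} {D : Set E}
    (hD_span : D ⊆ Submodule.span 𝕜 (Set.range v))
    (hspan_closure : (Submodule.span 𝕜 (Set.range v) : Set E) ⊆ closure D)
    (hD : ∀ y ∈ D, FrameInequality 𝕜 a b v y) : IsFrameSequence 𝕜 a b v := by
  intro x hx
  have hclosure : ∀ y ∈ (Submodule.span 𝕜 (Set.range v)).topologicalClosure, y ∈ closure D :=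
    fun y hy => closure_minimal hspan_closure isClosed_closure hy
  have hupper : ∀ y ∈ (Submodule.span 𝕜 (Set.range v)).topologicalClosure,
      analysisEnergy 𝕜 v y ≤ b * ‖y‖ₑ ^ 2 := fun y hy =>
    analysisEnergy_le_of_mem_closure (fun z hz => (hD z hz).2) (hclosure y hy)
  refine ⟨le_analysisEnergy_of_mem_closure (b := b) (fun y hy => (hD y hy).1) (fun y hy => ?_)
    (hclosure x hx), hupper x hx⟩
  exact hupper _ (sub_mem (Submodule.le_topologicalClosure _ (hD_span hy)) hx)

end Frames

lemma span_range_subset_closure_of_denseRange {R F ι κ : Type*} [Semiring R] [TopologicalSpace R]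
    [AddCommMonoid F] [Module R F] [TopologicalSpace F] [ContinuousAdd F] [ContinuousSMul R F]
    (v : ι → F) {c : κ → ι → R} (hc : DenseRange c) :
    (Submodule.span R (Set.range v) : Set F) ⊆
      closure (Set.range fun p : Finset ι × κ => ∑ i ∈ p.1, c p.2 i • v i) := by
  intro z hz
  obtain ⟨d, rfl⟩ := Finsupp.mem_span_range_iff_exists_finsupp.1 hz
  have hcont : Continuous fun b : ι → R => ∑ i ∈ d.support, b i • v i := by fun_prop
  refine closure_mono ?_ (hcont.range_subset_closure_image_dense hc ⟨d, rfl⟩)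
  rintro _ ⟨_, ⟨n, rfl⟩, rfl⟩
  exact ⟨(d.support, n), rfl⟩

section Lp

variable {X 𝕜 E : Type*} [MeasurableSpace X] {μ : Measure X} [RCLike 𝕜] [NormedAddCommGroup E]

lemma ae_mem_of_mem_topologicalClosure_span [NormedSpace 𝕜 E] {p : ℝ≥0∞} [Fact (1 ≤ p)]
    {s : Set (Lp E p μ)} {V : X → Submodule 𝕜 E} (hV : ∀ x, IsClosed (V x : Set E))
    (hs : ∀ k ∈ s, ∀ᵐ x ∂μ, k x ∈ V x) {h : Lp E p μ}
    (hh : h ∈ (Submodule.span 𝕜 s).topologicalClosure) : ∀ᵐ x ∂μ, h x ∈ V x := by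
  have hspan : ∀ k ∈ Submodule.span 𝕜 s, ∀ᵐ x ∂μ, k x ∈ V x := by
    intro k hk
    induction hk using Submodule.span_induction with
    | mem k hk => exact hs k hk
    | zero =>
      filter_upwards [Lp.coeFn_zero E p μ] with x hx
      rw [hx]
      exact zero_mem (V x)
    | add k l _ _ hk hl =>
      filter_upwards [hk, hl, Lp.coeFn_add k l] with x hkx hlx hx
      exact hx ▸ add_mem hkx hlx
    | smul c k _ hk =>
      filter_upwards [hk, Lp.coeFn_smul c k] with x hkx hx
      exact hx ▸ Submodule.smul_mem _ c hkx
  obtain ⟨u, hu, hlim⟩ := mem_closure_iff_seq_limit.1 hh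
  obtain ⟨ns, -, hns⟩ := (tendstoInMeasure_of_tendsto_Lp hlim).exists_seq_tendsto_ae
  filter_upwards [hns, ae_all_iff.2 fun n => hspan (u n) (hu n)] with x hx hux
  exact (hV x).mem_of_tendsto hx (Eventually.of_forall fun n => hux (ns n))

lemma enorm_sq_eq_lintegral (h : Lp E 2 μ) : ‖h‖ₑ ^ 2 = ∫⁻ x, ‖h x‖ₑ ^ 2 ∂μ := by
  rw [Lp.enorm_def]
  simpa using eLpNorm_nnreal_pow_eq_lintegral (f := h) (μ := μ) (p := 2) two_ne_zero

end Lp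

section ParsevalDetermining

variable {X Y M 𝕜 : Type*} [MeasurableSpace X] [MeasurableSpace Y] {μ : Measure X} [RCLike 𝕜]

/-- The family `e` is *Parseval determining*: the Parseval identity `∑ |∫ e_m φ|² = ∫ |φ|²` holds
in `[0, ∞]` for every integrable `φ`, not only for square-integrable ones. The second integrability
condition, automatic when the `e m` are bounded, keeps the integrals on the left meaningful. -/
def IsParsevalDetermining (μ : Measure X) (e : M → X → 𝕜) : Prop :=
  ∀ φ : X → 𝕜, Integrable φ μ → (∀ m, Integrable (fun x => e m x * φ x) μ) →
    ∑' m, ‖∫ x, e m x * φ x ∂μ‖ₑ ^ 2 = ∫⁻ x, ‖φ x‖ₑ ^ 2 ∂μ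

lemma IsParsevalDetermining.of_measurePreserving {ν : Measure Y} {s : Y → X} {e : M → X → 𝕜}
    (hs : MeasurePreserving s ν μ) (hs' : MeasurableEmbedding s)
    (he : IsParsevalDetermining ν fun m => e m ∘ s) : IsParsevalDetermining μ e := by
  intro φ hφ heφ
  have h := he (φ ∘ s) (hs.integrable_comp_of_integrable hφ)
    fun m => hs.integrable_comp_of_integrable (heφ m)
  simp only [Function.comp_apply] at h
  rw [hs.lintegral_comp_emb hs' fun x => ‖φ x‖ₑ ^ 2] at h
  rw [← h]
  refine tsum_congr fun m => ?_
  rw [hs.integral_comp hs' fun x => e m x * φ x]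

lemma IsParsevalDetermining.ae_eq_zero {e : M → X → 𝕜} (he : IsParsevalDetermining μ e)
    {φ : X → 𝕜} (hφ : Integrable φ μ) (heφ : ∀ m, Integrable (fun x => e m x * φ x) μ)
    (hzero : ∀ m, ∫ x, e m x * φ x ∂μ = 0) : φ =ᵐ[μ] 0 := by
  have h : ∫⁻ x, ‖φ x‖ₑ ^ 2 ∂μ = 0 := by simp [← he φ hφ heφ, hzero]
  rw [lintegral_eq_zero_iff' (hφ.1.enorm.pow_const 2)] at h
  filter_upwards [h] with x hx
  simpa using hx

end ParsevalDetermining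

lemma tsum_enorm_repr_sq {ι 𝕜 E : Type*} [RCLike 𝕜] [NormedAddCommGroup E] [InnerProductSpace 𝕜 E]
    (b : HilbertBasis ι 𝕜 E) (x : E) : ∑' i, ‖b.repr x i‖ₑ ^ 2 = ‖x‖ₑ ^ 2 := by
  have h : HasSum (fun i => ‖b.repr x i‖ ^ 2) (‖x‖ ^ 2) := by
    simpa using lp.hasSum_norm (p := 2) (by norm_num) (b.repr x)
  simp only [← ofReal_norm, ← ENNReal.ofReal_pow (norm_nonneg _)]
  rw [← ENNReal.ofReal_tsum_of_nonneg (fun _ => by positivity) h.summable, h.tsum_eq]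

lemma exists_repr_eq_of_tsum_ne_top {ι 𝕜 E : Type*} [RCLike 𝕜] [NormedAddCommGroup E]
    [InnerProductSpace 𝕜 E] (b : HilbertBasis ι 𝕜 E) {c : ι → 𝕜} (hc : ∑' i, ‖c i‖ₑ ^ 2 ≠ ∞) :
    ∃ x, ∀ i, b.repr x i = c i := by
  have hmem : Memℓp c 2 := by
    refine memℓp_gen ?_
    simpa using ENNReal.summable_toReal hc
  exact ⟨b.repr.symm ⟨c, hmem⟩, fun i => by simp⟩

section HilbertBasis

variable {X M 𝕜 : Type*} [MeasurableSpace X] {μ : Measure X} [RCLike 𝕜]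
  {e : M → X → 𝕜} {b : HilbertBasis M 𝕜 (Lp 𝕜 2 μ)}

lemma mul_ae_eq_inner (hb : ∀ m, b m =ᵐ[μ] fun x => conj (e m x)) (m : M) (ψ : Lp 𝕜 2 μ) :
    (fun x => e m x * ψ x) =ᵐ[μ] fun x => inner 𝕜 (b m x) (ψ x) := by
  filter_upwards [hb m] with x hx
  rw [hx, RCLike.inner_apply, RCLike.conj_conj, mul_comm]

lemma repr_eq_integral (hb : ∀ m, b m =ᵐ[μ] fun x => conj (e m x)) (m : M) (ψ : Lp 𝕜 2 μ) :
    b.repr ψ m = ∫ x, e m x * ψ x ∂μ := by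
  rw [b.repr_apply_apply, L2.inner_def]
  exact integral_congr_ae (mul_ae_eq_inner hb m ψ).symm

lemma tsum_enorm_integral_sq_of_memLp (hb : ∀ m, b m =ᵐ[μ] fun x => conj (e m x)) {φ : X → 𝕜}
    (hφ : MemLp φ 2 μ) : ∑' m, ‖∫ x, e m x * φ x ∂μ‖ₑ ^ 2 = ∫⁻ x, ‖φ x‖ₑ ^ 2 ∂μ := by
  have hcoeff (m : M) : ∫ x, e m x * φ x ∂μ = b.repr hφ.toLp m := by
    rw [repr_eq_integral hb]
    refine integral_congr_ae ?_
    filter_upwards [hφ.coeFn_toLp] with x hx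
    rw [hx]
  simp only [hcoeff, tsum_enorm_repr_sq, enorm_sq_eq_lintegral]
  refine lintegral_congr_ae ?_
  filter_upwards [hφ.coeFn_toLp] with x hx
  rw [hx]

lemma memLp_two_of_tsum_ne_top [IsFiniteMeasure μ] (hb : ∀ m, b m =ᵐ[μ] fun x => conj (e m x))
    (hunique : ∀ φ : X → 𝕜, Integrable φ μ → (∀ m, Integrable (fun x => e m x * φ x) μ) →
      (∀ m, ∫ x, e m x * φ x ∂μ = 0) → φ =ᵐ[μ] 0)
    {φ : X → 𝕜} (hφ : Integrable φ μ) (heφ : ∀ m, Integrable (fun x => e m x * φ x) μ)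
    (hfin : ∑' m, ‖∫ x, e m x * φ x ∂μ‖ₑ ^ 2 ≠ ∞) : MemLp φ 2 μ := by
  obtain ⟨ψ, hψ⟩ := exists_repr_eq_of_tsum_ne_top b hfin
  have hψ_int : Integrable ψ μ := (Lp.memLp ψ).integrable one_le_two
  have heψ (m : M) : Integrable (fun x => e m x * ψ x) μ :=
    (L2.integrable_inner (b m) ψ).congr (mul_ae_eq_inner hb m ψ).symm
  have hsub : φ - ⇑ψ =ᵐ[μ] 0 := by
    refine hunique _ (hφ.sub hψ_int) (fun m => ?_) fun m => ?_ <;>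
      simp only [Pi.sub_apply, mul_sub]
    · exact (heφ m).sub (heψ m)
    · rw [integral_sub (heφ m) (heψ m), ← repr_eq_integral hb, hψ, sub_self]
  exact (memLp_congr_ae (sub_ae_eq_zero _ _ |>.1 hsub)).2 (Lp.memLp ψ)

lemma isParsevalDetermining_of_hilbertBasis [IsFiniteMeasure μ]
    (hb : ∀ m, b m =ᵐ[μ] fun x => conj (e m x))
    (hunique : ∀ φ : X → 𝕜, Integrable φ μ → (∀ m, Integrable (fun x => e m x * φ x) μ) →
      (∀ m, ∫ x, e m x * φ x ∂μ = 0) → φ =ᵐ[μ] 0) : IsParsevalDetermining μ e := by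
  intro φ hφ heφ
  by_cases hφ2 : MemLp φ 2 μ
  · exact tsum_enorm_integral_sq_of_memLp hb hφ2
  · trans ∞
    · exact not_ne_iff.1 (mt (memLp_two_of_tsum_ne_top hb hunique hφ heφ) hφ2)
    · refine (not_ne_iff.1 (mt (fun hfin => ⟨hφ.1, ?_⟩) hφ2)).symm
      rw [eLpNorm_lt_top_iff_lintegral_rpow_enorm_lt_top two_ne_zero ENNReal.ofNat_ne_top]
      simpa [lt_top_iff_ne_top] using hfin

end HilbertBasis

section Density

variable {X 𝕜 E : Type*} [TopologicalSpace X] [MeasurableSpace X] {μ : Measure X} [RCLike 𝕜]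

lemma ae_eq_zero_of_forall_integral_smul_eq_zero [BorelSpace X] [HasOuterApproxClosed X]
    [NormedAddCommGroup E] [NormedSpace ℝ E] [CompleteSpace E] {φ : X → E} (hφ : Integrable φ μ)
    (h : ∀ p : BoundedContinuousFunction X ℝ≥0, ∫ x, p x • φ x ∂μ = 0) : φ =ᵐ[μ] 0 := by
  refine ae_eq_zero_of_forall_setIntegral_isClosed_eq_zero hφ fun s hs => ?_
  have hlim : Tendsto (fun n => ∫ x, hs.apprSeq n x • φ x ∂μ) atTop (𝓝 (∫ x in s, φ x ∂μ)) := by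
    rw [← integral_indicator hs.measurableSet]
    refine tendsto_integral_of_dominated_convergence (fun x => ‖φ x‖)
      (fun n => (hs.apprSeq n).continuous.aestronglyMeasurable.smul hφ.1) hφ.norm
      (fun n => Eventually.of_forall fun x => ?_) (Eventually.of_forall fun x => ?_)
    · rw [NNReal.smul_def, norm_smul, NNReal.norm_eq]
      refine mul_le_of_le_one_left (norm_nonneg _) ?_
      exact_mod_cast HasOuterApproxClosed.apprSeq_apply_le_one hs n x
    · have hx := tendsto_pi_nhds.1 (HasOuterApproxClosed.tendsto_apprSeq hs) x
      convert hx.smul_const (φ x) using 2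
      by_cases hxs : x ∈ s <;> simp [hxs]
  simp only [h] at hlim
  exact tendsto_nhds_unique hlim tendsto_const_nhds

lemma continuous_integral_mul [CompactSpace X] [OpensMeasurableSpace X] {φ : X → 𝕜}
    (hφ : Integrable φ μ) : Continuous fun p : C(X, 𝕜) => ∫ x, p x * φ x ∂μ := by
  refine continuous_iff_continuousAt.2 fun p => ?_
  refine continuousAt_of_dominated (bound := fun x => (‖p‖ + 1) * ‖φ x‖)
    (Eventually.of_forall fun q => q.continuous.aestronglyMeasurable.mul hφ.1) ?_
    (hφ.norm.const_mul _) (Eventually.of_forall fun x =>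
      ((continuous_eval_const x).mul continuous_const).continuousAt)
  filter_upwards [Metric.ball_mem_nhds p one_pos] with q hq
  refine Eventually.of_forall fun x => ?_
  have hqp : ‖q‖ ≤ ‖p‖ + 1 := by
    linarith [norm_le_norm_add_norm_sub' q p, mem_ball_iff_norm.1 hq]
  rw [norm_mul]
  gcongr
  exact (q.norm_coe_le_norm x).trans hqp

lemma ae_eq_zero_of_forall_integral_mul_eq_zero [CompactSpace X] [BorelSpace X]
    [HasOuterApproxClosed X] {s : Set C(X, 𝕜)}
    (hs : (Submodule.span 𝕜 s).topologicalClosure = ⊤) {φ : X → 𝕜} (hφ : Integrable φ μ)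
    (h : ∀ p ∈ s, ∫ x, p x * φ x ∂μ = 0) : φ =ᵐ[μ] 0 := by
  have hint (p : C(X, 𝕜)) : Integrable (fun x => p x * φ x) μ :=
    hφ.bdd_mul p.continuous.aestronglyMeasurable (Eventually.of_forall p.norm_coe_le_norm)
  have hspan : ∀ p ∈ Submodule.span 𝕜 s, ∫ x, p x * φ x ∂μ = 0 := by
    intro p hp
    induction hp using Submodule.span_induction with
    | mem p hp => exact h p hp
    | zero => simp
    | add p q _ _ hp hq =>
      simp only [ContinuousMap.add_apply, add_mul]
      rw [integral_add (hint p) (hint q), hp, hq, add_zero]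
    | smul c p _ hp =>
      simp only [ContinuousMap.smul_apply, smul_eq_mul, mul_assoc]
      rw [integral_const_mul, hp, mul_zero]
  have hall (p : C(X, 𝕜)) : ∫ x, p x * φ x ∂μ = 0 :=
    closure_minimal hspan (isClosed_singleton.preimage (continuous_integral_mul hφ))
      (show p ∈ (Submodule.span 𝕜 s).topologicalClosure from hs ▸ Submodule.mem_top)
  refine ae_eq_zero_of_forall_integral_smul_eq_zero hφ fun p => ?_
  rw [← hall ⟨fun x => ((p x : ℝ) : 𝕜), by fun_prop⟩]
  simp [NNReal.smul_def, RCLike.real_smul_eq_coe_mul]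

end Density

section Torus

/-- Normalised Haar measure on the torus `(ℝ/ℤ)^d`. -/
abbrev torusHaar (d : Type*) [Fintype d] : Measure (UnitAddTorus d) :=
  Measure.pi fun _ => AddCircle.haarAddCircle

lemma isParsevalDetermining_mFourier (d : Type*) [Fintype d] :
    IsParsevalDetermining (torusHaar d) fun m => ⇑(mFourier (d := d) m) := by
  suffices h : IsParsevalDetermining (torusHaar d) fun m => ⇑(mFourier (d := d) (-m)) by
    intro φ hφ heφ
    rw [← h φ hφ fun m => heφ (-m)]
    exact ((Equiv.neg _).tsum_eq _).symm
  refine isParsevalDetermining_of_hilbertBasis (b := mFourierBasis) (fun m => ?_)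
    fun φ hφ _ hzero => ?_
  · filter_upwards [coeFn_mFourierLp 2 m] with t ht
    rw [coe_mFourierBasis, ht, mFourier_neg, RCLike.conj_conj]
  · refine ae_eq_zero_of_forall_integral_mul_eq_zero span_mFourier_closure_eq_top hφ ?_
    rintro _ ⟨m, rfl⟩
    simpa using hzero (-m)

/-- The section of `ℝ^d → (ℝ/ℤ)^d` with values in `(0, 1]^d`. It differs only on a null set from the
section with values in the cube `[0, 1)^d`, and Mathlib's measure-theoretic facts are stated for
half-open intervals of this kind. -/
def torusSection {d : Type*} (t : UnitAddTorus d) (i : d) : ℝ := AddCircle.equivIoc 1 0 (t i)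

lemma measurableSet_pi_Ioc (d : Type*) [Countable d] :
    MeasurableSet {x : d → ℝ | ∀ i, x i ∈ Set.Ioc (0 : ℝ) (0 + 1)} :=
  MeasurableSet.univ_pi' fun _ => measurableSet_Ioc

lemma measurableEmbedding_torusSection (d : Type*) [Countable d] :
    MeasurableEmbedding (torusSection (d := d)) :=
  (MeasurableEmbedding.subtype_coe (measurableSet_pi_Ioc d)).comp
    (measurableEquivPiIoc fun _ => (0 : ℝ)).measurableEmbedding

lemma torusMeasure_eq_restrict_Ioc (r : ℕ) : torusMeasure r =
    volume.restrict {x : Fin r → ℝ | ∀ i, x i ∈ Set.Ioc (0 : ℝ) (0 + 1)} := by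
  have hIoc : {x : Fin r → ℝ | ∀ i, x i ∈ Set.Ioc (0 : ℝ) (0 + 1)} =
      Set.univ.pi fun _ => Set.Ioc (0 : ℝ) 1 := by
    ext x
    simp [Set.mem_pi]
  rw [hIoc]
  exact Measure.restrict_congr_set <|
    (Measure.univ_pi_Ico_ae_eq_Icc (μ := fun _ => volume)).trans
      (Measure.univ_pi_Ioc_ae_eq_Icc (μ := fun _ => volume)).symm

lemma measurePreserving_torusSection (r : ℕ) :
    MeasurePreserving torusSection (torusHaar (Fin r)) (torusMeasure r) := by
  rw [torusMeasure_eq_restrict_Ioc]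
  exact (measurePreserving_subtype_coe (measurableSet_pi_Ioc (Fin r))).comp
    (measurePreserving_equivPiIoc fun _ => (0 : ℝ))

lemma char_torusSection {r : ℕ} (m : Fin r → ℤ) (t : UnitAddTorus (Fin r)) :
    char m (torusSection t) = mFourier m t := by
  have hsection (i : Fin r) : ((torusSection t i : ℝ) : UnitAddCircle) = t i :=
    (AddCircle.equivIoc (1 : ℝ) 0).symm_apply_apply (t i)
  calc char m (torusSection t)
      = Complex.exp (∑ i, 2 * Real.pi * Complex.I * m i * torusSection t i) := by
        simp only [char, Finset.mul_sum, mul_assoc]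
    _ = ∏ i, fourier (m i) ((torusSection t i : ℝ) : UnitAddCircle) := by
        simp [Complex.exp_sum]
    _ = mFourier m t := by simp only [hsection]; rfl

lemma isParsevalDetermining_char (r : ℕ) :
    IsParsevalDetermining (torusMeasure r) (char (r := r)) := by
  refine .of_measurePreserving (measurePreserving_torusSection r)
    (measurableEmbedding_torusSection (Fin r)) ?_
  convert isParsevalDetermining_mFourier (Fin r) using 2
  exact funext (char_torusSection _)

instance inst_s8 (r : ℕ) : SigmaFinite (torusMeasure r) := inferInstanceAs (SigmaFinite (volume.restrict _))

end Torus

section Modulation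

variable {X M I 𝕜 E : Type*} [MeasurableSpace X] {μ : Measure X} [RCLike 𝕜]
  [NormedAddCommGroup E] [InnerProductSpace 𝕜 E]
  {e : M → X → 𝕜} {g : I → Lp E 2 μ} {f : I × M → Lp E 2 μ}

/-- The family `f` consists of the modulations `e m • g i` of the generators `g i`. -/
def IsModulationSystem (e : M → X → 𝕜) (g : I → Lp E 2 μ) (f : I × M → Lp E 2 μ) : Prop :=
  ∀ i m, f (i, m) =ᵐ[μ] fun x => e m x • g i x

variable (𝕜) in
/-- The fibre `J(x)`: the closed linear span of the values at `x` of the generators. -/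
def fibreSpan (g : I → Lp E 2 μ) (x : X) : Submodule 𝕜 E :=
  (Submodule.span 𝕜 (Set.range fun i => g i x)).topologicalClosure

lemma IsModulationSystem.inner_ae_eq (hf : IsModulationSystem e g f) (h : Lp E 2 μ) (i : I)
    (m : M) : (fun x => inner 𝕜 (h x) (f (i, m) x)) =ᵐ[μ]
      fun x => e m x * inner 𝕜 (h x) (g i x) := by
  filter_upwards [hf i m] with x hx
  rw [hx, inner_smul_right]

lemma IsModulationSystem.inner_eq_integral (hf : IsModulationSystem e g f) (h : Lp E 2 μ) (i : I)
    (m : M) : inner 𝕜 h (f (i, m)) = ∫ x, e m x * inner 𝕜 (h x) (g i x) ∂μ := by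
  rw [L2.inner_def]
  exact integral_congr_ae (hf.inner_ae_eq h i m)

lemma IsModulationSystem.integrable_mul_inner (hf : IsModulationSystem e g f) (h : Lp E 2 μ)
    (i : I) (m : M) : Integrable (fun x => e m x * inner 𝕜 (h x) (g i x)) μ :=
  (L2.integrable_inner h (f (i, m))).congr (hf.inner_ae_eq h i m)

lemma IsModulationSystem.analysisEnergy_eq_lintegral [Countable I]
    (hf : IsModulationSystem e g f) (he : IsParsevalDetermining μ e) (h : Lp E 2 μ) :
    analysisEnergy 𝕜 f h = ∫⁻ x, analysisEnergy 𝕜 (fun i => g i x) (h x) ∂μ := by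
  have hint (i : I) : Integrable (fun x => inner 𝕜 (h x) (g i x)) μ := L2.integrable_inner h (g i)
  unfold analysisEnergy
  rw [ENNReal.tsum_prod', lintegral_tsum fun i => (hint i).1.enorm.pow_const 2]
  refine tsum_congr fun i => ?_
  simp only [hf.inner_eq_integral]
  exact he _ (hint i) fun m => hf.integrable_mul_inner h i m

lemma IsModulationSystem.ae_mem_fibreSpan (hf : IsModulationSystem e g f) {h : Lp E 2 μ}
    (hh : h ∈ (Submodule.span 𝕜 (Set.range f)).topologicalClosure) :
    ∀ᵐ x ∂μ, h x ∈ fibreSpan 𝕜 g x := by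
  refine ae_mem_of_mem_topologicalClosure_span
    (fun x => Submodule.isClosed_topologicalClosure _) ?_ hh
  rintro _ ⟨⟨i, m⟩, rfl⟩
  filter_upwards [hf i m] with x hx
  rw [hx]
  exact Submodule.le_topologicalClosure _
    (Submodule.smul_mem _ _ (Submodule.subset_span ⟨i, rfl⟩))

lemma IsModulationSystem.mem_topologicalClosure_span [CompleteSpace E] [Countable I]
    (hf : IsModulationSystem e g f) (he : IsParsevalDetermining μ e) {h : Lp E 2 μ}
    (hh : ∀ᵐ x ∂μ, h x ∈ fibreSpan 𝕜 g x) :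
    h ∈ (Submodule.span 𝕜 (Set.range f)).topologicalClosure := by
  rw [← Submodule.orthogonal_orthogonal_eq_closure, Submodule.mem_orthogonal]
  intro k hk
  have hgen (i : I) : ∀ᵐ x ∂μ, inner 𝕜 (k x) (g i x) = 0 := by
    refine he.ae_eq_zero (L2.integrable_inner k (g i)) (hf.integrable_mul_inner k i) fun m => ?_
    have hmem : f (i, m) ∈ Submodule.span 𝕜 (Set.range f) := Submodule.subset_span ⟨(i, m), rfl⟩
    rw [← hf.inner_eq_integral]
    exact Submodule.inner_left_of_mem_orthogonal hmem hk
  rw [L2.inner_def]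
  refine integral_eq_zero_of_ae ?_
  filter_upwards [hh, ae_all_iff.2 hgen] with x hhx hkx
  have hk_orth : k x ∈ (fibreSpan 𝕜 g x)ᗮ := by
    rw [fibreSpan, Submodule.orthogonal_closure, Submodule.mem_orthogonal']
    intro y hy
    induction hy using Submodule.span_induction with
    | mem y hy => obtain ⟨i, rfl⟩ := hy; exact hkx i
    | zero => exact inner_zero_right _
    | add y z _ _ hy hz => rw [inner_add_right, hy, hz, add_zero]
    | smul c y _ hy => rw [inner_smul_right, hy, mul_zero]
  exact Submodule.inner_left_of_mem_orthogonal hhx hk_orth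

lemma IsModulationSystem.isFrameSequence_of_ae [Countable I] (hf : IsModulationSystem e g f)
    (he : IsParsevalDetermining μ e) {a b : ℝ≥0}
    (hg : ∀ᵐ x ∂μ, IsFrameSequence 𝕜 a b fun i => g i x) : IsFrameSequence 𝕜 a b f := by
  intro h hh
  have hfibre : ∀ᵐ x ∂μ, FrameInequality 𝕜 a b (fun i => g i x) (h x) := by
    filter_upwards [hg, hf.ae_mem_fibreSpan hh] with x hgx hhx using hgx _ hhx
  rw [FrameInequality, hf.analysisEnergy_eq_lintegral he, enorm_sq_eq_lintegral,
    ← lintegral_const_mul' _ _ ENNReal.coe_ne_top, ← lintegral_const_mul' _ _ ENNReal.coe_ne_top]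
  exact ⟨lintegral_mono_ae (hfibre.mono fun _ hx => hx.1),
    lintegral_mono_ae (hfibre.mono fun _ hx => hx.2)⟩

lemma IsModulationSystem.setLIntegral_frameInequality [CompleteSpace E] [Countable I]
    (hf : IsModulationSystem e g f) (he : IsParsevalDetermining μ e) {a b : ℝ≥0}
    (hframe : IsFrameSequence 𝕜 a b f) {h : Lp E 2 μ} (hh : ∀ᵐ x ∂μ, h x ∈ fibreSpan 𝕜 g x)
    {s : Set X} (hs : MeasurableSet s) :
    ∫⁻ x in s, a * ‖h x‖ₑ ^ 2 ∂μ ≤ ∫⁻ x in s, analysisEnergy 𝕜 (fun i => g i x) (h x) ∂μ ∧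
      ∫⁻ x in s, analysisEnergy 𝕜 (fun i => g i x) (h x) ∂μ ≤ ∫⁻ x in s, b * ‖h x‖ₑ ^ 2 ∂μ := by
  let k : Lp E 2 μ := ((Lp.memLp h).indicator hs).toLp
  have hk : k =ᵐ[μ] s.indicator h := ((Lp.memLp h).indicator hs).coeFn_toLp
  have hk_mem : ∀ᵐ x ∂μ, k x ∈ fibreSpan 𝕜 g x := by
    filter_upwards [hk, hh] with x hkx hhx
    rw [hkx]
    by_cases hxs : x ∈ s <;> simp [hxs, hhx, zero_mem]
  have lintegral_k (F : X → E → ℝ≥0∞) (hF : ∀ x, F x 0 = 0) :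
      ∫⁻ x, F x (k x) ∂μ = ∫⁻ x in s, F x (h x) ∂μ := by
    rw [← lintegral_indicator hs]
    refine lintegral_congr_ae ?_
    filter_upwards [hk] with x hkx
    by_cases hxs : x ∈ s <;> simp [hkx, hxs, hF]
  have hk_frame := hframe k (hf.mem_topologicalClosure_span he hk_mem)
  rw [FrameInequality, hf.analysisEnergy_eq_lintegral he, enorm_sq_eq_lintegral,
    lintegral_k (fun x => analysisEnergy 𝕜 fun i => g i x) fun x => by simp [analysisEnergy],
    lintegral_k (fun _ y => ‖y‖ₑ ^ 2) fun _ => by simp] at hk_frame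
  simpa only [lintegral_const_mul' _ _ ENNReal.coe_ne_top] using hk_frame

lemma IsModulationSystem.ae_frameInequality [SigmaFinite μ] [CompleteSpace E] [Countable I]
    (hf : IsModulationSystem e g f) (he : IsParsevalDetermining μ e) {a b : ℝ≥0}
    (hframe : IsFrameSequence 𝕜 a b f) {h : Lp E 2 μ} (hh : ∀ᵐ x ∂μ, h x ∈ fibreSpan 𝕜 g x) :
    ∀ᵐ x ∂μ, FrameInequality 𝕜 a b (fun i => g i x) (h x) := by
  have aemeasurable_norm (c : ℝ≥0) : AEMeasurable (fun x => c * ‖h x‖ₑ ^ 2) μ :=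
    ((Lp.aestronglyMeasurable h).enorm.pow_const 2).const_mul _
  have aemeasurable_energy : AEMeasurable (fun x => analysisEnergy 𝕜 (fun i => g i x) (h x)) μ :=
    AEMeasurable.tsum fun i =>
      (L2.integrable_inner (𝕜 := 𝕜) h (g i)).aestronglyMeasurable.enorm.pow_const 2
  have hset {s : Set X} (hs : MeasurableSet s) := hf.setLIntegral_frameInequality he hframe hh hs
  filter_upwards [
    ae_le_of_forall_setLIntegral_le_of_sigmaFinite₀ (aemeasurable_norm a) fun s hs _ => (hset hs).1,
    ae_le_of_forall_setLIntegral_le_of_sigmaFinite₀ aemeasurable_energy fun s hs _ => (hset hs).2]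
    with x hlower hupper using ⟨hlower, hupper⟩

lemma IsModulationSystem.ae_isFrameSequence [SigmaFinite μ] [CompleteSpace E] [Countable I]
    (hf : IsModulationSystem e g f) (he : IsParsevalDetermining μ e) {a b : ℝ≥0}
    (hframe : IsFrameSequence 𝕜 a b f) : ∀ᵐ x ∂μ, IsFrameSequence 𝕜 a b fun i => g i x := by
  let c : ℕ → I → 𝕜 := TopologicalSpace.denseSeq (I → 𝕜)
  have sum_mem (t : Finset I) (n : ℕ) (x : X) :
      ∑ i ∈ t, c n i • g i x ∈ Submodule.span 𝕜 (Set.range fun i => g i x) :=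
    Submodule.sum_mem _ fun i _ => Submodule.smul_mem _ _ (Submodule.subset_span ⟨i, rfl⟩)
  have hcomb (t : Finset I) (n : ℕ) :
      ∀ᵐ x ∂μ, FrameInequality 𝕜 a b (fun i => g i x) (∑ i ∈ t, c n i • g i x) := by
    have hsum : ⇑(∑ i ∈ t, c n i • g i) =ᵐ[μ] fun x => ∑ i ∈ t, c n i • g i x := by
      filter_upwards [Lp.coeFn_fun_finsetSum t fun i => c n i • g i,
        ae_all_iff.2 fun i => Lp.coeFn_smul (c n i) (g i)] with x hx hsmul
      simp only [hx, hsmul, Pi.smul_apply]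
    have hmem : ∀ᵐ x ∂μ, (∑ i ∈ t, c n i • g i) x ∈ fibreSpan 𝕜 g x := by
      filter_upwards [hsum] with x hx
      exact hx ▸ Submodule.le_topologicalClosure _ (sum_mem t n x)
    filter_upwards [hsum, hf.ae_frameInequality he hframe hmem] with x hx hineq
    rwa [hx] at hineq
  filter_upwards [ae_all_iff.2 fun t => ae_all_iff.2 (hcomb t)] with x hx
  refine isFrameSequence_of_dense ?_
    (span_range_subset_closure_of_denseRange _ (TopologicalSpace.denseRange_denseSeq (I → 𝕜))) ?_
  · rintro _ ⟨⟨t, n⟩, rfl⟩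
    exact sum_mem t n x
  · rintro _ ⟨⟨t, n⟩, rfl⟩
    exact hx t n

theorem frame_characterization_general [SigmaFinite μ] [CompleteSpace E] [Countable I]
    (he : IsParsevalDetermining μ e) (g : I → Lp E 2 μ) (f : I × M → Lp E 2 μ)
    (hf : IsModulationSystem e g f) (a b : ℝ≥0) :
    IsFrameSequence 𝕜 a b f ↔ ∀ᵐ x ∂μ, IsFrameSequence 𝕜 a b fun i => g i x :=
  ⟨hf.ae_isFrameSequence he, hf.isFrameSequence_of_ae he⟩

end Modulation

/-- **Characterization of frames (transform side).** The family `{f_{i,m}}`,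
`f_{i,m}(σ) = e_m(σ) g_i(σ)`, is a frame with constants `A, B` for
`S = closed span {f_{i,m}}` iff for a.e. `σ` the family `{g_i(σ)}` is a frame with the same
constants for `J(σ) = closed span {g_i(σ)}`. -/
theorem frame_characterization (r : ℕ) (hr : 0 < r)
    {H : Type} [NormedAddCommGroup H] [InnerProductSpace ℂ H] [CompleteSpace H]
    [TopologicalSpace.SeparableSpace H]
    {I : Type} [Countable I]
    (g : I → Lp H 2 (torusMeasure r))
    (f : I × (Fin r → ℤ) → Lp H 2 (torusMeasure r))
    (hf : ∀ (i : I) (m : Fin r → ℤ),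
      ⇑(f (i, m)) =ᵐ[torusMeasure r] fun σ => char m σ • ⇑(g i) σ)
    (A B : ℝ) (hA : 0 < A) (hAB : A ≤ B) :
    (∀ h : Lp H 2 (torusMeasure r),
      h ∈ (Submodule.span ℂ (Set.range f)).topologicalClosure →
      ENNReal.ofReal A * (‖h‖₊ : ℝ≥0∞) ^ 2 ≤
          ∑' p : I × (Fin r → ℤ), (‖(inner ℂ h (f p) : ℂ)‖₊ : ℝ≥0∞) ^ 2 ∧
        ∑' p : I × (Fin r → ℤ), (‖(inner ℂ h (f p) : ℂ)‖₊ : ℝ≥0∞) ^ 2 ≤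
          ENNReal.ofReal B * (‖h‖₊ : ℝ≥0∞) ^ 2) ↔
    (∀ᵐ σ ∂(torusMeasure r), ∀ x : H,
      x ∈ (Submodule.span ℂ (Set.range fun i => ⇑(g i) σ)).topologicalClosure →
      ENNReal.ofReal A * (‖x‖₊ : ℝ≥0∞) ^ 2 ≤
          ∑' i : I, (‖(inner ℂ x (⇑(g i) σ) : ℂ)‖₊ : ℝ≥0∞) ^ 2 ∧
        ∑' i : I, (‖(inner ℂ x (⇑(g i) σ) : ℂ)‖₊ : ℝ≥0∞) ^ 2 ≤
          ENNReal.ofReal B * (‖x‖₊ : ℝ≥0∞) ^ 2) :=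
  frame_characterization_general (isParsevalDetermining_char r) g f hf A.toNNReal B.toNNReal
end
end
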